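/- Let G be a finite tree, let S be a nonempty subset of its vertices, and let T be the minimal subtree of G spanning S (the union over all pairs of vertices of S of the unique G-path between them). Let K be any vertex set with S ⊆ K ⊆ V(T), and suppose there exists a vertex v ∈ V(T) \ K whose degree in T is at least 3. Define the graph H on vertex set K by: u is adjacent to w in H if and only if u ≠ w and every internal vertex of the unique path in T between u and w lies outside K. Then H contains three pairwise adjacent vertices (a 3-cycle); in particular, H is not a tree. Hence every vertex of degree at least 3 of T must be kept to preserve radiality, establishing the minimality of the kept set in Theorem 1. -/

import Mathlib

/-!
Let `v` be a branch vertex of `T` outside `K`. From each neighbor `n` of `v` in `T`, a path between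
two vertices of `S` leads to `K` without passing through `v`; stop it at the first kept vertex
`k n`. As `T` has no cycle, different neighbors give different `k n`, and the walk from `k m` back
to `m`, through `v`, to `n` and on to `k n` meets `K` only at its ends. So the Kron reduction joins
all the `k n` pairwise: eliminating `v` turns its star into a clique.
-/

open SimpleGraph

variable {V : Type*} {G : SimpleGraph V}

/-- The union of the paths of `G` with both ends in `S`: in a tree, the vertex set of the minimal
subtree spanning `S`. -/
def pathHull (G : SimpleGraph V) (S : Set V) : Set V :=
  {x | ∃ s ∈ S, ∃ t ∈ S, ∃ p : G.Walk s t, p.IsPath ∧ x ∈ p.support}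

/-- The combinatorial Kron reduction onto `K` of the subgraph of `G` induced on `T`. Paths inside
that subgraph are encoded as paths of `G` whose support lies in `T`, and adjacency asks only for
the existence of a path with interior outside `K`, so that no uniqueness of paths is presupposed. -/
def kronReduction (G : SimpleGraph V) (T K : Set V) : SimpleGraph K where
  Adj u w := u ≠ w ∧ ∃ p : G.Walk u.1 w.1, p.IsPath ∧ (∀ x ∈ p.support, x ∈ T) ∧
    ∀ x ∈ p.support, x ≠ u.1 → x ≠ w.1 → x ∉ K
  symm.symm := by
    rintro u w ⟨huw, p, hp, hpT, hpK⟩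
    exact ⟨huw.symm, p.reverse, hp.reverse, by simpa using hpT,
      fun x hx hxw hxu ↦ hpK x (by simpa using hx) hxu hxw⟩
  loopless.irrefl _ h := h.1 rfl

theorem exists_walk_to_first_mem {K : Set V} {u w : V} (p : G.Walk u w) (hw : w ∈ K) :
    ∃ k ∈ K, ∃ q : G.Walk u k, q.support ⊆ p.support ∧ ∀ x ∈ q.support, x ∈ K → x = k := by
  classical
  obtain ⟨k, hk, hkp, hfirst⟩ :=
    p.exists_mem_support_forall_mem_support_imp_eq {x ∈ p.support.toFinset | x ∈ K}
      ⟨w, by simp [hw]⟩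
  have hsub := p.support_takeUntil_subset_support hkp
  exact ⟨k, (Finset.mem_filter.1 hk).2, p.takeUntil k hkp, hsub,
    fun x hx hxK ↦ hfirst x (by simp [hsub hx, hxK]) hx⟩

theorem exists_walk_avoiding_of_mem_pathHull {S : Set V} {n v : V} (hn : n ∈ pathHull G S)
    (hnv : n ≠ v) :
    ∃ r ∈ S, ∃ q : G.Walk n r, v ∉ q.support ∧ ∀ x ∈ q.support, x ∈ pathHull G S := by
  obtain ⟨s, hs, t, ht, p, hp, hnp⟩ := hn
  obtain ⟨p₁, p₂, -, -, rfl⟩ := hp.mem_support_iff_exists_append.1 hnp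
  have hhull : ∀ x, x ∈ p₁.support ∨ x ∈ p₂.support → x ∈ pathHull G S :=
    fun x hx ↦ ⟨s, hs, t, ht, _, hp, (Walk.mem_support_append_iff p₁ p₂).2 hx⟩
  by_cases hv : v ∈ p₁.support
  · exact ⟨t, ht, p₂, fun hv' ↦ hp.ne_of_mem_support_of_append hnv.symm hv hv' rfl,
      fun x hx ↦ hhull x (.inr hx)⟩
  · exact ⟨s, hs, p₁.reverse, by simpa using hv, fun x hx ↦ hhull x (.inl (by simpa using hx))⟩

theorem mem_support_of_walk_between_neighbors (hG : G.IsAcyclic) {v m n : V} (hm : G.Adj v m)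
    (hn : G.Adj v n) (hmn : m ≠ n) (p : G.Walk m n) : v ∈ p.support := by
  classical
  refine p.support_bypass_subset_support ?_
  exact hG.mem_support_of_ne_mem_support_of_adj_of_isPath p.bypass_isPath
    (Walk.IsPath.of_adj hm.symm) hn.symm (by simp [hmn.symm, hn.ne'])

theorem end_ne_of_walks_avoiding (hG : G.IsAcyclic) {v m n k l : V} (hm : G.Adj v m)
    (hn : G.Adj v n) (hmn : m ≠ n) {p : G.Walk m k} {q : G.Walk n l} (hp : v ∉ p.support)
    (hq : v ∉ q.support) : k ≠ l := by
  rintro rfl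
  have hv := mem_support_of_walk_between_neighbors hG hm hn hmn (p.append q.reverse)
  simp [hp, hq] at hv

section kronReduction

variable {T K : Set V}

theorem kronReduction_adj_of_walk {u w : K} (huw : u ≠ w) (p : G.Walk u.1 w.1)
    (hpT : ∀ x ∈ p.support, x ∈ T) (hpK : ∀ x ∈ p.support, x ∈ K → x = u ∨ x = w) :
    (kronReduction G T K).Adj u w := by
  classical
  have hsub := p.support_bypass_subset_support
  exact ⟨huw, p.bypass, p.bypass_isPath, fun x hx ↦ hpT x (hsub hx),
    fun x hx hxu hxw hxK ↦ (hpK x (hsub hx) hxK).elim hxu hxw⟩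

theorem kronReduction_adj_of_walks_from_neighbors {v m n : V} (hvT : v ∈ T) (hvK : v ∉ K)
    (hm : G.Adj v m) (hn : G.Adj v n) {k l : K} (hkl : k ≠ l) {p : G.Walk m k} {q : G.Walk n l}
    (hpT : ∀ x ∈ p.support, x ∈ T) (hpK : ∀ x ∈ p.support, x ∈ K → x = k)
    (hqT : ∀ x ∈ q.support, x ∈ T) (hqK : ∀ x ∈ q.support, x ∈ K → x = l) :
    (kronReduction G T K).Adj k l := by
  let r : G.Walk k.1 l.1 := (Walk.cons hm p).reverse.append (Walk.cons hn q)
  have hr : ∀ x ∈ r.support, x = v ∨ x ∈ p.support ∨ x ∈ q.support := by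
    intro x hx
    simp only [r, Walk.mem_support_append_iff, Walk.support_reverse, Walk.support_cons,
      List.mem_reverse, List.mem_cons] at hx
    tauto
  refine kronReduction_adj_of_walk hkl r (fun x hx ↦ ?_) (fun x hx hxK ↦ ?_)
  · rcases hr x hx with rfl | hxp | hxq
    exacts [hvT, hpT x hxp, hqT x hxq]
  · rcases hr x hx with rfl | hxp | hxq
    exacts [absurd hxK hvK, .inl (hpK x hxp hxK), .inr (hqK x hxq hxK)]

theorem completeGraph_neighbors_isContained_kronReduction (hG : G.IsAcyclic) {v : V} (hvT : v ∈ T)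
    (hvK : v ∉ K)
    (hreach : ∀ n ∈ T ∩ G.neighborSet v, ∃ k ∈ K, ∃ q : G.Walk n k,
      v ∉ q.support ∧ ∀ x ∈ q.support, x ∈ T) :
    completeGraph ↥(T ∩ G.neighborSet v) ⊑ kronReduction G T K := by
  have hfirst : ∀ n : ↥(T ∩ G.neighborSet v), ∃ k : K, ∃ q : G.Walk n.1 k.1,
      v ∉ q.support ∧ (∀ x ∈ q.support, x ∈ T) ∧ ∀ x ∈ q.support, x ∈ K → x = k := by
    rintro ⟨n, hn⟩
    obtain ⟨r, hr, p, hvp, hpT⟩ := hreach n hn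
    obtain ⟨k, hk, q, hqp, hqK⟩ := exists_walk_to_first_mem p hr
    exact ⟨⟨k, hk⟩, q, fun h ↦ hvp (hqp h), fun x hx ↦ hpT x (hqp hx), hqK⟩
  choose k q hvq hqT hqK using hfirst
  have hk : ∀ {m n}, m ≠ n → k m ≠ k n := fun {m n} hmn h ↦
    end_ne_of_walks_avoiding hG m.2.2 n.2.2 (Subtype.coe_ne_coe.2 hmn) (hvq m) (hvq n)
      (congrArg Subtype.val h)
  let f : completeGraph ↥(T ∩ G.neighborSet v) →g kronReduction G T K :=
    { toFun := k
      map_rel' := fun {m n} hmn ↦ kronReduction_adj_of_walks_from_neighbors hvT hvK m.2.2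
        n.2.2 (hk hmn) (hqT m) (hqK m) (hqT n) (hqK n) }
  exact ⟨f.toCopy f.injective_of_top_hom⟩

end kronReduction

theorem exists_triangle_of_completeGraph_isContained {α β : Type*} {H : SimpleGraph β}
    (hα : 3 ≤ Nat.card α) (h : completeGraph α ⊑ H) :
    ∃ a b c, H.Adj a b ∧ H.Adj b c ∧ H.Adj a c := by
  obtain ⟨f⟩ := h
  have : Finite α := Nat.finite_of_card_ne_zero (by lia)
  have := Fintype.ofFinite α
  obtain ⟨a, b, c, hab, hac, hbc⟩ := Fintype.two_lt_card_iff.1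
    (hα.trans_eq Nat.card_eq_fintype_card)
  exact ⟨f a, f b, f c, f.toHom.map_adj hab, f.toHom.map_adj hbc, f.toHom.map_adj hac⟩

theorem radialization_minimality_general (hG : G.IsAcyclic) {S K : Set V} (hSK : S ⊆ K) {v : V}
    (hv : v ∈ pathHull G S) (hvK : v ∉ K) :
    completeGraph ↥(pathHull G S ∩ G.neighborSet v) ⊑ kronReduction G (pathHull G S) K := by
  refine completeGraph_neighbors_isContained_kronReduction hG hv hvK fun n hn ↦ ?_
  obtain ⟨r, hr, q, hvq, hq⟩ := exists_walk_avoiding_of_mem_pathHull hn.1 hn.2.ne'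
  exact ⟨r, hSK hr, q, hvq, hq⟩

/-- **Minimality direction of the radialization theorem.**
Let `G` be a finite tree, `S` a nonempty vertex set, and `VT` the vertex set of
the minimal subtree `T` of `G` spanning `S` (the union over all pairs of
vertices of `S` of the unique `G`-path between them); being a subtree of the
tree `G`, `T` is the subgraph of `G` induced on `VT`, and the degree in `T` of
a vertex `x` is `(VT ∩ G.neighborSet x).ncard`. Let `K` be a vertex set with
`S ⊆ K ⊆ VT`, and suppose some vertex `v ∈ VT \ K` has degree at least 3 in
`T`. Then the Kron reduction `H` of `T` onto `K` — two kept vertices being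
adjacent iff they are distinct and every internal vertex of the unique path of
`T` between them lies outside `K` — contains three pairwise adjacent vertices;
in particular, `H` is not a tree. -/
theorem radialization_minimality {V : Type} [Fintype V] [DecidableEq V]
    (G : SimpleGraph V) (hG : G.IsTree)
    (S : Set V) (hS : S.Nonempty)
    (VT : Set V)
    (hVT : VT = {x | ∃ s ∈ S, ∃ t ∈ S, ∃ p : G.Walk s t, p.IsPath ∧ x ∈ p.support})
    (K : Set V) (hSK : S ⊆ K) (hKVT : K ⊆ VT)
    (hv : ∃ v ∈ VT, v ∉ K ∧ 3 ≤ (VT ∩ G.neighborSet v).ncard)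
    (H : SimpleGraph K)
    (hH : ∀ u w : K, H.Adj u w ↔ u ≠ w ∧
      ∃ p : G.Walk u.1 w.1, p.IsPath ∧ (∀ x ∈ p.support, x ∈ VT) ∧
        (∀ x ∈ p.support, x ≠ u.1 → x ≠ w.1 → x ∉ K)) :
    (∃ a b c : K, H.Adj a b ∧ H.Adj b c ∧ H.Adj a c) ∧ ¬ H.IsTree := by
  obtain ⟨v, hvVT, hvK, hdeg⟩ := hv
  obtain rfl : H = kronReduction G VT K := by ext u w; exact hH u w
  subst hVT
  obtain ⟨a, b, c, hab, hbc, hac⟩ := exists_triangle_of_completeGraph_isContained hdeg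
    (radialization_minimality_general hG.isAcyclic hSK hvVT hvK)
  exact ⟨⟨a, b, c, hab, hbc, hac⟩, fun hT ↦
    hT.isAcyclic.cliqueFree le_rfl _ (is3Clique_triple_iff.2 ⟨hab, hac, hbc⟩)⟩
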